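/- Let R be a ring. A left R-module M is Gorenstein projective if and only if there exists a short exact sequence of left R-modules 0 → M → P → G → 0 where P is projective and G is Gorenstein projective. -/

import Mathlib

universe u

/-- A witness that `M` is a Gorenstein projective left `R`-module: a doubly infinite exact
sequence of projective left `R`-modules `⋯ → P (-1) → P 0 → P 1 → ⋯` with
`M ≅ Im (P 0 → P 1)`, which stays exact after applying `Hom_R(−, Q)` for every projective
left `R`-module `Q`. -/
structure GorensteinProjectiveWitness (R : Type u) [Ring R]
    (M : Type u) [AddCommGroup M] [Module R M] where
  P : ℤ → Type u
  [acg : ∀ i, AddCommGroup (P i)]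
  [mod : ∀ i, Module R (P i)]
  d : ∀ i, P i →ₗ[R] P (i + 1)
  proj : ∀ i, Module.Projective R (P i)
  exact : ∀ i, Function.Exact (d i) (d (i + 1))
  iso : M ≃ₗ[R] LinearMap.range (d 0)
  homExact : ∀ (Q : Type u) [AddCommGroup Q] [Module R Q], Module.Projective R Q →
    ∀ i, Function.Exact (fun f : P (i + 1 + 1) →ₗ[R] Q => f ∘ₗ d (i + 1))
      (fun f : P (i + 1) →ₗ[R] Q => f ∘ₗ d i)

/-- A left `R`-module is Gorenstein projective if it admits a Gorenstein projective
witness. -/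
def IsGorensteinProjective (R : Type u) [Ring R]
    (M : Type u) [AddCommGroup M] [Module R M] : Prop :=
  Nonempty (GorensteinProjectiveWitness R M)

/-- `0 → A → B → C → 0` is a short exact sequence. -/
def IsShortExact {R : Type u} [Ring R] {A B C : Type u}
    [AddCommGroup A] [Module R A] [AddCommGroup B] [Module R B] [AddCommGroup C] [Module R C]
    (f : A →ₗ[R] B) (g : B →ₗ[R] C) : Prop :=
  Function.Injective f ∧ Function.Exact f g ∧ Function.Surjective g

/-- One step of a totally acyclic complex: a short exact sequence `0 → A → P → B → 0` with `P`
projective such that every map from `A` to a projective extends to `P`. -/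
def GStep (R : Type u) [Ring R] (A B : Type u) [AddCommGroup A] [Module R A]
    [AddCommGroup B] [Module R B] : Prop :=
  ∃ (P : ModuleCat.{u} R) (f : A →ₗ[R] P) (g : P →ₗ[R] B),
    Module.Projective R P ∧ IsShortExact f g ∧
    ∀ (Q : Type u) [AddCommGroup Q] [Module R Q], Module.Projective R Q →
      ∀ α : A →ₗ[R] Q, ∃ β : P →ₗ[R] Q, β ∘ₗ f = α

theorem gp_factor {R : Type u} [Ring R] {X B Q : Type u} [AddCommGroup X] [Module R X]
    [AddCommGroup B] [Module R B] [AddCommGroup Q] [Module R Q]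
    (s : X →ₗ[R] B) (t : X →ₗ[R] Q) (hs : Function.Surjective s)
    (h : ∀ x, s x = 0 → t x = 0) : ∃ w : B →ₗ[R] Q, w ∘ₗ s = t := by
  have hk : LinearMap.ker s ≤ LinearMap.ker t := fun x hx => h x hx
  refine ⟨(LinearMap.ker s).liftQ t hk ∘ₗ (s.quotKerEquivOfSurjective hs).symm.toLinearMap, ?_⟩
  ext x
  have : (s.quotKerEquivOfSurjective hs).symm (s x) = (LinearMap.ker s).mkQ x := by
    rw [LinearEquiv.symm_apply_eq]; rfl
  simp [this]

theorem gp_extend {R : Type u} [Ring R] {K G A B : Type u} [AddCommGroup K] [Module R K]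
    [AddCommGroup G] [Module R G] [AddCommGroup A] [Module R A] [AddCommGroup B] [Module R B]
    (hKG : GStep R K G) (f : A →ₗ[R] B) (g : B →ₗ[R] G) (h : IsShortExact f g)
    (Q : Type u) [AddCommGroup Q] [Module R Q] (hQ : Module.Projective R Q) (α : A →ₗ[R] Q) :
    ∃ β : B →ₗ[R] Q, β ∘ₗ f = α := by
  obtain ⟨P, k, e, hP, ⟨hk, hke, he⟩, hext⟩ := hKG
  obtain ⟨hf, hfg, hg⟩ := h
  obtain ⟨φ, hφ⟩ := Module.projective_lifting_property g e hg
  have hφ' : ∀ p, g (φ p) = e p := fun p => LinearMap.congr_fun hφ p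
  have hmem : ∀ y : K, φ (k y) ∈ LinearMap.range f := fun y => by
    have : g (φ (k y)) = 0 := by rw [hφ', hke.apply_apply_eq_zero]
    exact (hfg _).1 this
  let ψ : K →ₗ[R] A := (LinearEquiv.ofInjective f hf).symm.toLinearMap ∘ₗ
    (φ ∘ₗ k).codRestrict (LinearMap.range f) hmem
  have hψ : ∀ y, f (ψ y) = φ (k y) := fun y => by
    have := congrArg Subtype.val
      ((LinearEquiv.ofInjective f hf).apply_symm_apply ⟨φ (k y), hmem y⟩)
    exact this
  obtain ⟨β, hβ⟩ := hext Q hQ (α ∘ₗ ψ)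
  have hβ' : ∀ y, β (k y) = α (ψ y) := fun y => LinearMap.congr_fun hβ y
  obtain ⟨w, hw⟩ := gp_factor (f.coprod φ) (α.coprod β) (by
      intro b
      obtain ⟨p, hp⟩ := he (g b)
      have : g (b - φ p) = 0 := by rw [map_sub, hφ', hp, sub_self]
      obtain ⟨a, ha⟩ := (hfg _).1 this
      exact ⟨(a, p), by simp [ha]⟩) (by
      rintro ⟨a, p⟩ hap
      simp only [LinearMap.coprod_apply] at hap ⊢
      have h1 : e p = 0 := by
        have := congrArg g hap
        rwa [map_add, hfg.apply_apply_eq_zero, hφ', zero_add, map_zero] at this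
      obtain ⟨y, rfl⟩ := (hke _).1 h1
      rw [← hψ, ← map_add] at hap
      have h2 : a + ψ y = 0 := hf (by rw [hap, map_zero])
      rw [hβ', ← map_add, h2, map_zero])
  refine ⟨w, ?_⟩
  ext a
  have := LinearMap.congr_fun hw (a, 0)
  simpa using this

/-- Horseshoe step. -/
theorem gp_horseshoe {R : Type u} [Ring R] {K L G X P : Type u} [AddCommGroup K] [Module R K]
    [AddCommGroup L] [Module R L]
    [AddCommGroup G] [Module R G] [AddCommGroup X] [Module R X] [AddCommGroup P] [Module R P]
    (hLK : GStep R L K) (hKG : GStep R K G) (f : X →ₗ[R] P) (g : P →ₗ[R] G)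
    (h : IsShortExact f g) (hP : Module.Projective R P) :
    ∃ (X' P' : ModuleCat.{u} R) (f' : X' →ₗ[R] P') (g' : P' →ₗ[R] K),
      IsShortExact f' g' ∧ Module.Projective R P' ∧ GStep R X' X := by
  obtain ⟨P0, k, e, hP0, ⟨hk, hke, he⟩, hext⟩ := hKG
  obtain ⟨hf, hfg, hg⟩ := h
  obtain ⟨φ, hφ⟩ := Module.projective_lifting_property g e hg
  have hφ' : ∀ p, g (φ p) = e p := fun p => LinearMap.congr_fun hφ p
  let c : (X →₀ R) →ₗ[R] X := Finsupp.linearCombination R id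
  have hc : Function.Surjective c := Finsupp.linearCombination_id_surjective R X
  let s : ((X →₀ R) × P0) →ₗ[R] P := (f ∘ₗ c).coprod φ
  have hs' : ∀ x p, s (x, p) = f (c x) + φ p := fun x p => by simp [s]
  have hs : Function.Surjective s := by
    intro b
    obtain ⟨p, hp⟩ := he (g b)
    have : g (b - φ p) = 0 := by rw [map_sub, hφ', hp, sub_self]
    obtain ⟨a, ha⟩ := (hfg _).1 this
    obtain ⟨x, rfl⟩ := hc a
    exact ⟨(x, p), by rw [hs', ha]; simp⟩
  obtain ⟨σ, hσ⟩ := Module.projective_lifting_property s LinearMap.id hs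
  have hσ' : ∀ b, s (σ b) = b := fun b => LinearMap.congr_fun hσ b
  let r : ((X →₀ R) × P0) →ₗ[R] LinearMap.ker s :=
    (LinearMap.id - σ ∘ₗ s).codRestrict (LinearMap.ker s) (fun v => by simp [hσ'])
  have hr : ∀ v : LinearMap.ker s, r v = v := fun v => by
    apply Subtype.ext
    have : s v = 0 := v.2
    simp [r, this]
  have hP' : Module.Projective R (LinearMap.ker s) :=
    Module.Projective.of_split (LinearMap.ker s).subtype r (by ext1 v; exact hr v)
  have hmem : ∀ v : LinearMap.ker s, v.1.2 ∈ LinearMap.range k := fun v => by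
    obtain ⟨⟨x, p⟩, hv⟩ := v
    have hv : f (c x) + φ p = 0 := by rw [← hs']; exact hv
    have := congrArg g hv
    rw [map_add, hfg.apply_apply_eq_zero, hφ', zero_add, map_zero] at this
    exact (hke _).1 this
  let g' : LinearMap.ker s →ₗ[R] K := (LinearEquiv.ofInjective k hk).symm.toLinearMap ∘ₗ
    (LinearMap.snd R _ _ ∘ₗ (LinearMap.ker s).subtype).codRestrict (LinearMap.range k) hmem
  have hg' : ∀ v, k (g' v) = v.1.2 := fun v =>
    congrArg Subtype.val ((LinearEquiv.ofInjective k hk).apply_symm_apply ⟨v.1.2, hmem v⟩)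
  let f' : LinearMap.ker c →ₗ[R] LinearMap.ker s :=
    (LinearMap.inl R _ _ ∘ₗ (LinearMap.ker c).subtype).codRestrict (LinearMap.ker s)
      (fun x => by
        have : c x = 0 := x.2
        rw [LinearMap.mem_ker]
        change s (x.1, 0) = 0
        rw [hs', this]; simp)
  have hf' : ∀ x, (f' x).1 = (x.1, 0) := fun x => rfl
  have hse : IsShortExact (R := R) (A := LinearMap.ker c) (B := LinearMap.ker s) (C := K)
      f' g' := by
    refine ⟨?_, ?_, ?_⟩
    · intro x y hxy
      have := congrArg Subtype.val hxy
      rw [hf', hf'] at this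
      exact Subtype.ext (Prod.ext_iff.1 this).1
    · intro v
      constructor
      · intro hv
        have h2 : v.1.2 = 0 := by rw [← hg', hv, map_zero]
        have h1 : f (c v.1.1) + φ v.1.2 = 0 := by rw [← hs']; exact v.2
        rw [h2, map_zero, add_zero] at h1
        have h3 : c v.1.1 = 0 := hf (by rw [h1, map_zero])
        exact ⟨⟨v.1.1, h3⟩, Subtype.ext (by rw [hf']; exact Prod.ext rfl h2.symm)⟩
      · rintro ⟨x, rfl⟩
        apply hk
        rw [hg', hf', map_zero]
    · intro y
      have : g (φ (k y)) = 0 := by rw [hφ', hke.apply_apply_eq_zero]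
      obtain ⟨a, ha⟩ := (hfg _).1 this
      obtain ⟨x, rfl⟩ := hc a
      refine ⟨⟨(-x, k y), ?_⟩, ?_⟩
      · rw [LinearMap.mem_ker, hs', map_neg, map_neg, ha, neg_add_cancel]
      · apply hk
        rw [hg']
  refine ⟨ModuleCat.of R (LinearMap.ker c), ModuleCat.of R (LinearMap.ker s), f', g', hse, hP',
    ModuleCat.of R (X →₀ R), (LinearMap.ker c).subtype, c, ?_, ⟨?_, ?_, hc⟩, ?_⟩
  · exact inferInstanceAs (Module.Projective R (X →₀ R))
  · exact Subtype.val_injective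
  · exact LinearMap.exact_subtype_ker_map c
  · intro Q _ _ hQ α
    obtain ⟨β, hβ⟩ := gp_extend (A := LinearMap.ker c) (B := LinearMap.ker s) hLK
      f' g' hse Q hQ α
    refine ⟨β ∘ₗ r ∘ₗ LinearMap.inl R _ _, ?_⟩
    refine LinearMap.ext fun x => ?_
    have h1 : r (x.1, 0) = f' x := hr (f' x)
    change β (r (x.1, 0)) = α x
    rw [h1]
    exact LinearMap.congr_fun hβ x

theorem gp_chain_of {R : Type u} [Ring R] {M : Type u} [AddCommGroup M] [Module R M]
    (h : IsGorensteinProjective R M) :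
    ∃ Z : ℤ → ModuleCat.{u} R, Nonempty (M ≃ₗ[R] Z 0) ∧ ∀ i, GStep R (Z i) (Z (i + 1)) := by
  obtain ⟨P, d, proj, exact, iso, homExact⟩ := h
  refine ⟨fun i => ModuleCat.of R (LinearMap.range (d i)), ⟨iso⟩, fun i => ?_⟩
  obtain ⟨j, rfl⟩ : ∃ j, i = j + 1 := ⟨i - 1, by ring⟩
  refine ⟨ModuleCat.of R (P (j + 1 + 1)), (LinearMap.range (d (j + 1))).subtype,
    (d (j + 1 + 1)).rangeRestrict, proj _, ⟨Subtype.val_injective, ?_, ?_⟩, ?_⟩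
  · intro x
    rw [← LinearMap.mem_ker, LinearMap.ker_rangeRestrict, LinearMap.mem_ker, exact (j + 1) x]
    simp
  · exact LinearMap.surjective_rangeRestrict _
  · intro Q _ _ hQ α
    let α' : LinearMap.range (d (j + 1)) →ₗ[R] Q := α
    obtain ⟨β, hβ⟩ := (homExact Q hQ j (α' ∘ₗ (d (j + 1)).rangeRestrict)).1 (by
      ext x
      have : (d (j + 1)).rangeRestrict (d j x) = 0 :=
        Subtype.ext ((exact j).apply_apply_eq_zero x)
      simp [this])
    refine ⟨β, LinearMap.ext ?_⟩
    rintro ⟨_, x, rfl⟩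
    exact LinearMap.congr_fun hβ x

theorem gp_of_chain {R : Type u} [Ring R] {M : Type u} [AddCommGroup M] [Module R M]
    (Z : ℤ → ModuleCat.{u} R) (iso : M ≃ₗ[R] Z (0 + 1))
    (h : ∀ i, GStep R (Z i) (Z (i + 1))) : IsGorensteinProjective R M := by
  choose P f g hP hfg hext using h
  have hz : ∀ i x, f i x = 0 → x = 0 := fun i x hx => (hfg i).1 (by rw [hx, map_zero])
  have hr : LinearMap.range (f (0 + 1) ∘ₗ g 0) = LinearMap.range (f (0 + 1)) :=
    LinearMap.range_comp_of_range_eq_top _ (LinearMap.range_eq_top.2 (hfg 0).2.2)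
  refine ⟨⟨fun i => P i, fun i => f (i + 1) ∘ₗ g i, hP, ?_,
    iso ≪≫ₗ LinearEquiv.ofInjective _ (hfg (0 + 1)).1 ≪≫ₗ LinearEquiv.ofEq _ _ hr.symm, ?_⟩⟩
  · intro i x
    constructor
    · intro hx
      obtain ⟨z, rfl⟩ := ((hfg (i + 1)).2.1 x).1 (hz _ _ hx)
      obtain ⟨y, rfl⟩ := (hfg i).2.2 z
      exact ⟨y, rfl⟩
    · rintro ⟨y, rfl⟩
      simp [(hfg (i + 1)).2.1.apply_apply_eq_zero]
  · intro Q _ _ hQ i β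
    constructor
    · intro hβ
      have h1 : ∀ z, β (f (i + 1) z) = 0 := fun z => by
        obtain ⟨y, rfl⟩ := (hfg i).2.2 z
        exact LinearMap.congr_fun hβ y
      obtain ⟨w, hw⟩ := gp_factor (g (i + 1)) β (hfg (i + 1)).2.2 (fun x hx => by
        obtain ⟨z, rfl⟩ := ((hfg (i + 1)).2.1 x).1 hx
        exact h1 z)
      obtain ⟨γ, hγ⟩ := hext (i + 1 + 1) Q hQ w
      refine ⟨γ, ?_⟩
      change γ ∘ₗ (f (i + 1 + 1) ∘ₗ g (i + 1)) = β
      rw [← LinearMap.comp_assoc, hγ, hw]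
    · rintro ⟨γ, rfl⟩
      ext y
      simp [(hfg (i + 1)).2.1.apply_apply_eq_zero]

/-- `X` embeds into a projective with cokernel a term of a chain. -/
def GTail (R : Type u) [Ring R] (X : ModuleCat.{u} R) : Prop :=
  ∃ Z : ℤ → ModuleCat.{u} R, (∀ i, GStep R (Z i) (Z (i + 1))) ∧
    ∃ (P : ModuleCat.{u} R) (f : X →ₗ[R] P) (g : P →ₗ[R] Z 0),
      IsShortExact f g ∧ Module.Projective R P

theorem GTail.prev {R : Type u} [Ring R] {X : ModuleCat.{u} R} (h : GTail R X) :
    ∃ X' : ModuleCat.{u} R, GTail R X' ∧ GStep R X' X := by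
  obtain ⟨Z, hZ, P, f, g, hfg, hP⟩ := h
  have z2 : GStep R (Z (-2)) (Z (0 + -1)) := by simpa using hZ (-2)
  have z1 : GStep R (Z (0 + -1)) (Z 0) := by simpa using hZ (-1)
  obtain ⟨X', P', f', g', hse, hP', hst⟩ := gp_horseshoe z2 z1 f g hfg hP
  refine ⟨X', ⟨fun i => Z (i + -1), fun i => ?_, P', f', g', hse, hP'⟩, hst⟩
  have := hZ (i + -1)
  have e : i + -1 + 1 = i + 1 + -1 := by ring
  rwa [e] at this

theorem gp_of_tail {R : Type u} [Ring R] {X : ModuleCat.{u} R} (h : GTail R X) :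
    IsGorensteinProjective R X := by
  have h' := h
  obtain ⟨Z, hZ, P, f, g, hfg, hP⟩ := h'
  have z1 : GStep R (Z (-1)) (Z 0) := by simpa using hZ (-1)
  have h0 : GStep R X (Z 0) :=
    ⟨P, f, g, hP, hfg, fun Q _ _ hQ α => gp_extend z1 f g hfg Q hQ α⟩
  choose p hp1 hp2 using fun Y : {Y : ModuleCat.{u} R // GTail R Y} => Y.2.prev
  let b : ℕ → {Y : ModuleCat.{u} R // GTail R Y} :=
    fun n => Nat.rec ⟨X, h⟩ (fun _ Y => ⟨p Y, hp1 Y⟩) n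
  have hb : ∀ n, GStep R (b (n + 1)).1 (b n).1 := fun n => hp2 (b n)
  -- `W 1 = X`, `W (n + 2) = Z n`, `W (-n) = b (n + 1)`
  let W : ℤ → ModuleCat.{u} R := fun i => if 2 ≤ i then Z (i - 2) else (b (1 - i).toNat).1
  refine gp_of_chain W (LinearEquiv.refl R X) (fun i => ?_)
  rcases lt_trichotomy i 1 with hi | rfl | hi
  · have e1 : W i = (b ((1 - (i + 1)).toNat + 1)).1 := by
      have : (1 - i).toNat = (1 - (i + 1)).toNat + 1 := by omega
      simp only [W, if_neg (show ¬ 2 ≤ i by omega), this]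
    have e2 : W (i + 1) = (b (1 - (i + 1)).toNat).1 := by
      simp only [W, if_neg (show ¬ 2 ≤ i + 1 by omega)]
    rw [e1, e2]
    exact hb _
  · exact h0
  · have e1 : W i = Z (i - 2) := by simp only [W, if_pos (show 2 ≤ i by omega)]
    have e2 : W (i + 1) = Z (i - 2 + 1) := by
      have : i + 1 - 2 = i - 2 + 1 := by ring
      simp only [W, if_pos (show 2 ≤ i + 1 by omega), this]
    rw [e1, e2]
    exact hZ _

/-- A module `M` is Gorenstein projective iff there is a short exact sequence
`0 → M → P → G → 0` with `P` projective and `G` Gorenstein projective. -/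
theorem isGorensteinProjective_iff_exists_shortExact_projective
    (R : Type u) [Ring R] (M : Type u) [AddCommGroup M] [Module R M] :
    IsGorensteinProjective R M ↔
      ∃ (P G : Type u) (_ : AddCommGroup P) (_ : Module R P) (_ : AddCommGroup G)
        (_ : Module R G) (f : M →ₗ[R] P) (g : P →ₗ[R] G),
        IsShortExact f g ∧ Module.Projective R P ∧ IsGorensteinProjective R G := by
  constructor
  · intro h
    obtain ⟨Z, ⟨iso⟩, hZ⟩ := gp_chain_of h
    obtain ⟨P, f, g, hP, ⟨h1, h2, h3⟩, -⟩ := hZ 0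
    refine ⟨P, Z (0 + 1), inferInstance, inferInstance, inferInstance, inferInstance,
      f ∘ₗ iso.toLinearMap, g, ⟨h1.comp iso.injective, ?_, h3⟩, hP,
      gp_of_chain Z (LinearEquiv.refl R _) hZ⟩
    intro x
    rw [h2 x]
    constructor
    · rintro ⟨z, rfl⟩
      exact ⟨iso.symm z, by simp⟩
    · rintro ⟨m, rfl⟩
      exact ⟨iso m, rfl⟩
  · rintro ⟨P, G, _, _, _, _, f, g, ⟨h1, h2, h3⟩, hP, hG⟩
    obtain ⟨Z, ⟨iso⟩, hZ⟩ := gp_chain_of hG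
    refine gp_of_tail (X := ModuleCat.of R M) ⟨Z, hZ, ModuleCat.of R P, f,
      iso.toLinearMap ∘ₗ g, ⟨h1, ?_, iso.surjective.comp h3⟩, hP⟩
    intro x
    rw [← h2 x]
    exact iso.map_eq_zero_iff
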